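/- Let T be a complete metric tree (complete geodesic metric space satisfying the four-point inequality), X a real normed space, J : T → X an isometric embedding, and A ⊆ T a nonempty bounded subset. Then the Kolmogorov diameters of the image of A converge to half the set measure of non-compactness of A: lim_{n→∞} δ_n(J(A), X) = α(A)/2, and likewise lim_{n→∞} δ_n^{(a)}(J(A), X) = α(A)/2. -/

import Mathlib

/-!
Both limits are squeezed between two bounds.

Lower bound (`half_noncompact_le_iSup`): it holds for isometric embeddings of any metric space.
If `J(A)` lies within `r` of a finite-dimensional affine subspace `M`, only a bounded part of `M`
matters. That part is totally bounded, so finitely many balls of radius `r + ε` cover `J(A)`, and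
their preimages in `A` have diameter at most `2 (r + ε)`. Hence `α(A) / 2 ≤ r`.

Upper bound (`exists_submodule_infDist_le`): here the tree structure enters, through
`exists_center`: a set of diameter at most `a` lies in a ball of radius `a / 2 + ε`. The centre is
the midpoint of an almost diametral pair, and the four-point inequality gives the estimate. The
linear span of the images of the centres of a finite cover of `A` is then a competitor for the
Kolmogorov diameters.

Linear subspaces are affine, so the affine diameter is at most the linear one; the lower bound for
the affine diameters and the upper bound for the linear ones therefore suffice.
-/

open Filter

/-- The `n`-th Kolmogorov diameter of `A ⊆ X`: the infimum over linear subspaces `M`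
of dimension at most `n` of `sup_{a ∈ A} dist(a, M)`. -/
noncomputable def kolmogorovDiam {X : Type*} [NormedAddCommGroup X] [NormedSpace ℝ X]
    (A : Set X) (n : ℕ) : ℝ :=
  sInf {r : ℝ | ∃ M : Submodule ℝ X, Module.rank ℝ M ≤ n ∧
    r = ⨆ a : A, Metric.infDist (a : X) (M : Set X)}

/-- The `n`-th affine Kolmogorov diameter of `A ⊆ X`: the infimum over nonempty affine
subspaces `M` of dimension at most `n` of `sup_{a ∈ A} dist(a, M)`. -/
noncomputable def affineKolmogorovDiam {X : Type*} [NormedAddCommGroup X]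
    [NormedSpace ℝ X] (A : Set X) (n : ℕ) : ℝ :=
  sInf {r : ℝ | ∃ M : AffineSubspace ℝ X, (M : Set X).Nonempty ∧
    Module.rank ℝ M.direction ≤ n ∧
    r = ⨆ a : A, Metric.infDist (a : X) (M : Set X)}

/-- The set (Kuratowski) measure of non-compactness of `A`: the infimum of the `a > 0`
such that `A` is covered by finitely many subsets of `A` each of diameter at most `a`. -/
noncomputable def setMeasureNoncompact {M : Type*} [MetricSpace M] (A : Set M) : ℝ :=
  sInf {a : ℝ | 0 < a ∧ ∃ (n : ℕ) (U : Fin n → Set M), (∀ i, U i ⊆ A) ∧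
    (∀ i, ∀ x ∈ U i, ∀ y ∈ U i, dist x y ≤ a) ∧ A ⊆ ⋃ i, U i}

/-- In a geodesic space with the four-point inequality, a set of diameter at most `a` lies in a
ball of radius `a / 2 + ε`. -/
lemma exists_center {T : Type*} [MetricSpace T] [Nonempty T]
    (hgeo : ∀ x y : T, ∃ γ : ℝ → T, γ 0 = x ∧ γ (dist x y) = y ∧
      ∀ s ∈ Set.Icc (0 : ℝ) (dist x y), ∀ t ∈ Set.Icc (0 : ℝ) (dist x y),
        dist (γ s) (γ t) = |s - t|)
    (hfour : ∀ x₁ x₂ x₃ x₄ : T, dist x₁ x₂ + dist x₃ x₄ ≤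
      max (dist x₁ x₃ + dist x₂ x₄) (dist x₁ x₄ + dist x₂ x₃))
    (U : Set T) (a : ℝ) (hU : ∀ x ∈ U, ∀ y ∈ U, dist x y ≤ a) {ε : ℝ} (hε : 0 < ε) :
    ∃ c : T, ∀ z ∈ U, dist z c ≤ a / 2 + ε := by
  rcases U.eq_empty_or_nonempty with rfl | ⟨u, hu⟩
  · exact ⟨Classical.arbitrary T, by simp⟩
  -- the set of mutual distances, whose supremum is the diameter of `U`
  let S : Set ℝ := {d | ∃ x ∈ U, ∃ y ∈ U, d = dist x y}
  have hSne : S.Nonempty := ⟨_, u, hu, u, hu, rfl⟩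
  have hSb : BddAbove S := ⟨a, by rintro _ ⟨x, hx, y, hy, rfl⟩; exact hU x hx y hy⟩
  have hSa : sSup S ≤ a := csSup_le hSne (by rintro _ ⟨x, hx, y, hy, rfl⟩; exact hU x hx y hy)
  have hS : ∀ x ∈ U, ∀ y ∈ U, dist x y ≤ sSup S := fun x hx y hy =>
    le_csSup hSb ⟨x, hx, y, hy, rfl⟩
  obtain ⟨_, ⟨x, hx, y, hy, rfl⟩, hxy⟩ :=
    exists_lt_of_lt_csSup hSne (show sSup S - ε < sSup S by linarith)
  obtain ⟨γ, h0, h1, hγ⟩ := hgeo x y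
  have hd : 0 ≤ dist x y := dist_nonneg
  have hm : dist x y / 2 ∈ Set.Icc (0 : ℝ) (dist x y) := ⟨by linarith, by linarith⟩
  have e0 := hγ (dist x y / 2) hm 0 ⟨le_rfl, hd⟩
  have e1 := hγ (dist x y / 2) hm (dist x y) ⟨hd, le_rfl⟩
  rw [h0, sub_zero, abs_of_nonneg hm.1] at e0
  rw [h1, abs_of_nonpos (by linarith)] at e1
  refine ⟨γ (dist x y / 2), fun z hz => ?_⟩
  have h4 := hfour z (γ (dist x y / 2)) x y
  have hzx := hS z hz x hx
  have hzy := hS z hz y hy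
  rcases le_max_iff.1 h4 with h | h <;> linarith

lemma noncompact_le_of_finite_cover {T ι : Type*} [MetricSpace T] [Finite ι] (A : Set T)
    {a : ℝ} (ha : 0 < a) (U : ι → Set T) (hUA : ∀ i, U i ⊆ A)
    (hU : ∀ i, ∀ x ∈ U i, ∀ y ∈ U i, dist x y ≤ a) (hcov : A ⊆ ⋃ i, U i) :
    setMeasureNoncompact A ≤ a := by
  obtain ⟨n, ⟨e⟩⟩ := Finite.exists_equiv_fin ι
  refine csInf_le ⟨0, fun b hb => hb.1.le⟩ ⟨ha, n, fun i => U (e.symm i), fun i => hUA _,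
    fun i => hU _, fun x hx => ?_⟩
  obtain ⟨i, hi⟩ := Set.mem_iUnion.1 (hcov hx)
  exact Set.mem_iUnion.2 ⟨e i, by simpa using hi⟩

/-- Every finite-dimensional affine subspace has deviation at least `α(A) / 2` from `J(A)`. -/
lemma half_noncompact_le_iSup {T X : Type*} [MetricSpace T]
    [NormedAddCommGroup X] [NormedSpace ℝ X] (J : T → X) (hJ : Isometry J)
    (A : Set T) (hAb : Bornology.IsBounded A)
    (M : AffineSubspace ℝ X) (hM : (M : Set X).Nonempty) (n : ℕ)
    (hn : Module.rank ℝ M.direction ≤ n) :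
    setMeasureNoncompact A / 2 ≤ ⨆ a : (J '' A), Metric.infDist (a : X) (M : Set X) := by
  obtain ⟨p, hp⟩ := hM
  have hfin : FiniteDimensional ℝ M.direction :=
    Module.rank_lt_aleph0_iff.1 (hn.trans_lt (Cardinal.natCast_lt_aleph0))
  have hprop : ProperSpace M.direction := FiniteDimensional.proper ℝ _
  obtain ⟨R, hR⟩ := (hJ.lipschitz.isBounded_image hAb).subset_closedBall p
  set r := ⨆ a : (J '' A), Metric.infDist (a : X) (M : Set X) with hr
  have hr0 : 0 ≤ r := Real.iSup_nonneg fun _ => Metric.infDist_nonneg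
  have hbdd : BddAbove (Set.range fun a : (J '' A) => Metric.infDist (a : X) (M : Set X)) := by
    refine ⟨R, ?_⟩
    rintro _ ⟨a, rfl⟩
    exact (Metric.infDist_le_dist_of_mem hp).trans (hR a.2)
  refine le_of_forall_pos_le_add fun ε hε => ?_
  -- every point of `J(A)` is within `r + ε / 2` of some `p + v` with `v` in this ball
  obtain ⟨t, -, htfin, ht⟩ := Metric.finite_approx_of_totallyBounded
    (isCompact_closedBall (0 : M.direction) (R + (r + ε / 2))).totallyBounded (ε / 2) (half_pos hε)
  have : Finite t := htfin
  suffices h : setMeasureNoncompact A ≤ 2 * (r + ε) by linarith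
  refine noncompact_le_of_finite_cover A (by linarith)
    (fun v : t => {x ∈ A | dist (J x) ((v : M.direction) + p) ≤ r + ε})
    (fun v => Set.sep_subset _ _) ?_ ?_
  · rintro v x ⟨-, hx⟩ y ⟨-, hy⟩
    rw [← hJ.dist_eq x y]
    linarith [dist_triangle_right (J x) (J y) ((v : M.direction) + p)]
  · intro x hx
    have hle : Metric.infDist (J x) (M : Set X) ≤ r :=
      le_ciSup hbdd ⟨J x, Set.mem_image_of_mem J hx⟩
    obtain ⟨m, hm, hxm⟩ := (Metric.infDist_lt_iff ⟨p, hp⟩).1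
      (show Metric.infDist (J x) (M : Set X) < r + ε / 2 by linarith)
    let w : M.direction := ⟨m -ᵥ p, AffineSubspace.vsub_mem_direction hm hp⟩
    have hw : w ∈ Metric.closedBall (0 : M.direction) (R + (r + ε / 2)) := by
      rw [mem_closedBall_zero_iff]
      change ‖m - p‖ ≤ _
      rw [← dist_eq_norm]
      have := Metric.mem_closedBall.1 (hR (Set.mem_image_of_mem J hx))
      linarith [dist_triangle_left m p (J x)]
    obtain ⟨v, hv, hwv⟩ := Set.mem_iUnion₂.1 (ht hw)
    refine Set.mem_iUnion.2 ⟨⟨v, hv⟩, hx, ?_⟩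
    have h2 : dist m ((v : X) + p) < ε / 2 := by
      have h3 : dist w v < ε / 2 := hwv
      rw [Subtype.dist_eq, dist_eq_norm] at h3
      change ‖(m - p) - (v : X)‖ < ε / 2 at h3
      rwa [dist_eq_norm, show m - ((v : X) + p) = m - p - v by abel]
    change dist (J x) ((v : X) + p) ≤ r + ε
    linarith [dist_triangle (J x) m ((v : X) + p)]

/-- For every `r > α(A) / 2`, some finite-dimensional subspace is within `r` of all of `J(A)`. -/
lemma exists_submodule_infDist_le {T X : Type*} [MetricSpace T]
    [NormedAddCommGroup X] [NormedSpace ℝ X]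
    (hgeo : ∀ x y : T, ∃ γ : ℝ → T, γ 0 = x ∧ γ (dist x y) = y ∧
      ∀ s ∈ Set.Icc (0 : ℝ) (dist x y), ∀ t ∈ Set.Icc (0 : ℝ) (dist x y),
        dist (γ s) (γ t) = |s - t|)
    (hfour : ∀ x₁ x₂ x₃ x₄ : T, dist x₁ x₂ + dist x₃ x₄ ≤
      max (dist x₁ x₃ + dist x₂ x₄) (dist x₁ x₄ + dist x₂ x₃))
    (J : T → X) (hJ : Isometry J)
    (A : Set T) (hA : A.Nonempty) (hAb : Bornology.IsBounded A)
    {r : ℝ} (hr : setMeasureNoncompact A / 2 < r) :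
    ∃ (n : ℕ) (M : Submodule ℝ X), Module.rank ℝ M ≤ n ∧
      ∀ x ∈ A, Metric.infDist (J x) (M : Set X) ≤ r := by
  have : Nonempty T := ⟨hA.some⟩
  -- `A` itself is a one-piece cover, so the infimum defining `α(A)` is over a nonempty set
  obtain ⟨C, hC⟩ := Metric.isBounded_iff.1 hAb
  have hne : {a : ℝ | 0 < a ∧ ∃ (n : ℕ) (U : Fin n → Set T), (∀ i, U i ⊆ A) ∧
      (∀ i, ∀ x ∈ U i, ∀ y ∈ U i, dist x y ≤ a) ∧ A ⊆ ⋃ i, U i}.Nonempty :=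
    ⟨max C 1, by positivity, 1, fun _ => A, fun _ => le_rfl,
      fun _ x hx y hy => (hC hx hy).trans (le_max_left _ _),
      fun x hx => Set.mem_iUnion.2 ⟨0, hx⟩⟩
  obtain ⟨a, ⟨-, n, U, -, hU, hcov⟩, har⟩ := exists_lt_of_csInf_lt hne
    (show setMeasureNoncompact A < 2 * r by linarith)
  choose c hc using fun i => exists_center hgeo hfour (U i) a (hU i)
    (show 0 < r - a / 2 by linarith)
  refine ⟨n, Submodule.span ℝ (Set.range (J ∘ c)), ?_, fun x hx => ?_⟩
  · have := FiniteDimensional.span_of_finite ℝ (Set.finite_range (J ∘ c))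
    rw [← Module.finrank_eq_rank]
    have h := finrank_range_le_card (R := ℝ) (J ∘ c)
    rw [Fintype.card_fin] at h
    exact_mod_cast h
  · obtain ⟨i, hi⟩ := Set.mem_iUnion.1 (hcov hx)
    have hci : J (c i) ∈ Submodule.span ℝ (Set.range (J ∘ c)) :=
      Submodule.subset_span ⟨i, rfl⟩
    refine (Metric.infDist_le_dist_of_mem (SetLike.mem_coe.2 hci)).trans ?_
    rw [hJ.dist_eq]
    linarith [hc i x hi]

/-- Let `T` be a complete metric tree (complete geodesic metric space
satisfying the four-point inequality) isometrically embedded (via `J`) in a real normed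
space `X`, and let `A ⊆ T` be nonempty and bounded. Then the (affine) Kolmogorov
diameters of `J(A)` converge to `α(A)/2`, half the set measure of non-compactness. -/
theorem tree_kolmogorov_diam_limit {T X : Type*} [MetricSpace T] [CompleteSpace T]
    [NormedAddCommGroup X] [NormedSpace ℝ X]
    (hgeo : ∀ x y : T, ∃ γ : ℝ → T, γ 0 = x ∧ γ (dist x y) = y ∧
      ∀ s ∈ Set.Icc (0 : ℝ) (dist x y), ∀ t ∈ Set.Icc (0 : ℝ) (dist x y),
        dist (γ s) (γ t) = |s - t|)
    (hfour : ∀ x₁ x₂ x₃ x₄ : T, dist x₁ x₂ + dist x₃ x₄ ≤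
      max (dist x₁ x₃ + dist x₂ x₄) (dist x₁ x₄ + dist x₂ x₃))
    (J : T → X) (hJ : Isometry J)
    (A : Set T) (hA : A.Nonempty) (hAb : Bornology.IsBounded A) :
    Tendsto (fun n => kolmogorovDiam (J '' A) n) atTop
      (nhds (setMeasureNoncompact A / 2)) ∧
    Tendsto (fun n => affineKolmogorovDiam (J '' A) n) atTop
      (nhds (setMeasureNoncompact A / 2)) := by
  have hmem : ∀ (n : ℕ) (M : Submodule ℝ X), Module.rank ℝ M ≤ n →
      setMeasureNoncompact A / 2 ≤ ⨆ a : (J '' A), Metric.infDist (a : X) (M : Set X) :=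
    fun n M hM => half_noncompact_le_iSup J hJ A hAb M.toAffineSubspace ⟨0, M.zero_mem⟩ n
      (by rwa [Submodule.toAffineSubspace_direction])
  have hlow : ∀ n, setMeasureNoncompact A / 2 ≤ affineKolmogorovDiam (J '' A) n := by
    intro n
    refine le_csInf ⟨_, (⊥ : Submodule ℝ X).toAffineSubspace, ⟨0, (⊥ : Submodule ℝ X).zero_mem⟩,
      by rw [Submodule.toAffineSubspace_direction]; simp, rfl⟩ ?_
    rintro _ ⟨M, hM, hn, rfl⟩
    exact half_noncompact_le_iSup J hJ A hAb M hM n hn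
  have hle : ∀ n, affineKolmogorovDiam (J '' A) n ≤ kolmogorovDiam (J '' A) n := by
    intro n
    refine csInf_le_csInf ⟨0, ?_⟩ ⟨_, ⊥, by simp, rfl⟩ ?_
    · rintro _ ⟨M, -, -, rfl⟩
      exact Real.iSup_nonneg fun _ => Metric.infDist_nonneg
    · rintro _ ⟨M, hM, rfl⟩
      exact ⟨M.toAffineSubspace, ⟨0, M.zero_mem⟩, by rwa [Submodule.toAffineSubspace_direction], rfl⟩
  have hup : ∀ r, setMeasureNoncompact A / 2 < r →
      ∀ᶠ n in atTop, kolmogorovDiam (J '' A) n < r := by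
    intro r hr
    obtain ⟨s, hs, hsr⟩ := exists_between hr
    obtain ⟨N, M, hM, hMA⟩ := exists_submodule_infDist_le hgeo hfour J hJ A hA hAb hs
    filter_upwards [eventually_ge_atTop N] with n hn
    have hinf : kolmogorovDiam (J '' A) n ≤
        ⨆ a : (J '' A), Metric.infDist (a : X) (M : Set X) := by
      refine csInf_le ⟨setMeasureNoncompact A / 2, ?_⟩
        ⟨M, hM.trans (by exact_mod_cast hn), rfl⟩
      rintro _ ⟨M', hM', rfl⟩
      exact hmem n M' hM'
    have : Nonempty (J '' A) := (hA.image J).to_subtype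
    refine (hinf.trans (ciSup_le ?_)).trans_lt hsr
    rintro ⟨_, x, hx, rfl⟩
    exact hMA x hx
  refine ⟨tendsto_order.2 ⟨fun b hb => ?_, hup⟩, tendsto_order.2 ⟨fun b hb => ?_, fun b hb => ?_⟩⟩
  · exact Eventually.of_forall fun n => hb.trans_le ((hlow n).trans (hle n))
  · exact Eventually.of_forall fun n => hb.trans_le (hlow n)
  · exact (hup b hb).mono fun n hn => (hle n).trans_lt hn
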